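/- (Theorem of the Alternative for SDP feasibility.) Consider the semidefinite program with data A₁, …, A_m ∈ S^n and b ∈ ℝ^m, and suppose the feasible set {X ∈ S^n : Aᵢ • X = bᵢ for i = 1,…,m, X ⪰ 0} is nonempty. If there is no y ∈ ℝ^m such that Σᵢ yᵢ Aᵢ ⪰ 0, Σᵢ yᵢ Aᵢ ≠ 0, and Σᵢ bᵢ yᵢ = 0, then Slater's condition holds: there exists a feasible X that is positive definite. -/

import Mathlib

open Matrix
open scoped BigOperators

/-!
Let `X₀` be feasible and `S = ⋂ ker (Aᵢ • ·)`. If `X₀ + S` misses the interior of the positive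
semidefinite cone, Hahn–Banach provides a nonzero functional that is nonnegative on the cone and
vanishes on `S` and at `X₀`. Vanishing on `S` makes it a combination `(∑ yᵢ Aᵢ) • ·` of the
constraints, and self-duality of the cone turns its nonnegativity into `∑ yᵢ Aᵢ ⪰ 0`, so that `y`
is a forbidden certificate.
-/

section LinearFunctionals

variable {𝕜 E : Type*} [Field 𝕜] [LinearOrder 𝕜] [IsStrictOrderedRing 𝕜] [AddCommGroup E]
  [Module 𝕜 E]

lemma nonneg_of_forall_mem_pointedCone_le {C : PointedCone 𝕜 E} {f : E →ₗ[𝕜] 𝕜} {u : 𝕜}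
    (hu : ∀ x ∈ C, u ≤ f x) {x : E} (hx : x ∈ C) : 0 ≤ f x := by
  by_contra! hneg
  have hu₀ : u ≤ 0 := by simpa using hu 0 C.zero_mem
  have hscale : 0 ≤ (u - 1) / f x := div_nonneg_of_nonpos (by linarith) hneg.le
  have hle : u ≤ (u - 1) / f x * f x := by simpa using hu _ (C.smul_mem hscale hx)
  rw [div_mul_cancel₀ _ hneg.ne] at hle
  linarith

lemma eq_zero_of_forall_mem_submodule_le {S : Submodule 𝕜 E} {f : E →ₗ[𝕜] 𝕜} {u : 𝕜}
    (hu : ∀ x ∈ S, u ≤ f x) {x : E} (hx : x ∈ S) : f x = 0 := by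
  have hnonneg : ∀ z ∈ S, 0 ≤ f z := fun z hz ↦
    nonneg_of_forall_mem_pointedCone_le (C := PointedCone.ofSubmodule S) hu hz
  refine le_antisymm ?_ (hnonneg x hx)
  simpa using hnonneg (-x) (S.neg_mem hx)

end LinearFunctionals

section ConicAlternative

variable {E : Type*} [AddCommGroup E] [Module ℝ E] [TopologicalSpace E]
  [IsTopologicalAddGroup E] [ContinuousSMul ℝ E]

theorem exists_supporting_functional_of_disjoint_interior (C : PointedCone ℝ E)
    (hC : (interior (C : Set E)).Nonempty) (S : Submodule ℝ E) {x₀ : E} (hx₀ : x₀ ∈ C)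
    (hdisj : ∀ s ∈ S, x₀ + s ∉ interior (C : Set E)) :
    ∃ f : StrongDual ℝ E, f ≠ 0 ∧ (∀ x ∈ C, 0 ≤ f x) ∧ (∀ s ∈ S, f s = 0) ∧ f x₀ = 0 := by
  have hdisj_slice : Disjoint (interior (C : Set E)) ((x₀ + ·) '' (S : Set E)) := by
    rw [Set.disjoint_right]
    rintro _ ⟨s, hs, rfl⟩
    exact hdisj s hs
  obtain ⟨f, u, hf, hfC, hfS⟩ := geometric_hahn_banach_of_nonempty_interior C.convex
    (S.convex.translate x₀) hdisj_slice hC ⟨x₀, 0, S.zero_mem, add_zero x₀⟩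
  have hpos : ∀ x ∈ C, 0 ≤ (-f) x := fun x hx ↦
    nonneg_of_forall_mem_pointedCone_le (f := (-f).toLinearMap)
      (fun z hz ↦ neg_le_neg (hfC z hz)) hx
  have hbdd : ∀ s ∈ S, u - f x₀ ≤ f s := fun s hs ↦ by
    linarith [hfS _ ⟨s, hs, rfl⟩, f.map_add x₀ s]
  have hS : ∀ s ∈ S, f s = 0 := fun s hs ↦
    eq_zero_of_forall_mem_submodule_le (f := f.toLinearMap) hbdd hs
  have hu : 0 ≤ u := by simpa using hfC 0 C.zero_mem
  have hux₀ : u ≤ f x₀ := by simpa using hbdd 0 S.zero_mem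
  have hx₀_nonpos : f x₀ ≤ 0 := neg_nonneg.mp (hpos x₀ hx₀)
  exact ⟨-f, neg_ne_zero.mpr hf, hpos, fun s hs ↦ neg_eq_zero.mpr (hS s hs),
    neg_eq_zero.mpr (le_antisymm hx₀_nonpos (hu.trans hux₀))⟩

theorem conic_theorem_of_the_alternative {ι : Type*} [Fintype ι] (C : PointedCone ℝ E)
    (hC : (interior (C : Set E)).Nonempty) (L : ι → E →ₗ[ℝ] ℝ) {x₀ : E} (hx₀ : x₀ ∈ C)
    (halt : ¬ ∃ y : ι → ℝ, (∀ x ∈ C, 0 ≤ (∑ i, y i • L i) x) ∧ ∑ i, y i • L i ≠ 0 ∧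
      (∑ i, y i • L i) x₀ = 0) :
    ∃ x ∈ interior (C : Set E), ∀ i, L i x = L i x₀ := by
  by_contra! hno
  have hdisj : ∀ s ∈ ⨅ i, (L i).ker, x₀ + s ∉ interior (C : Set E) := fun s hs hmem ↦ by
    obtain ⟨i, hi⟩ := hno _ hmem
    have hsi : L i s = 0 := (Submodule.mem_iInf _).mp hs i
    exact hi (by rw [map_add, hsi, add_zero])
  obtain ⟨f, hf, hfC, hfker, hfx₀⟩ :=
    exists_supporting_functional_of_disjoint_interior C hC _ hx₀ hdisj
  obtain ⟨y, hy⟩ := (Submodule.mem_span_range_iff_exists_fun ℝ).mp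
    (mem_span_of_iInf_ker_le_ker (L := L) (K := f.toLinearMap) hfker)
  refine halt ⟨y, ?_⟩
  rw [hy]
  exact ⟨hfC, fun h ↦ hf (ContinuousLinearMap.coe_injective h), hfx₀⟩

end ConicAlternative

section HermitianMatrices

variable {𝕜 n : Type*} [RCLike 𝕜]

open scoped ComplexOrder Topology

/-- The real vector space of Hermitian matrices, which is `S^n` for `𝕜 = ℝ`. The positive
semidefinite cone has nonempty interior in it, but in general not in the space of all matrices. -/
noncomputable abbrev HermitianMatrix (𝕜 n : Type*) [RCLike 𝕜] : Submodule ℝ (Matrix n n 𝕜) :=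
  selfAdjoint.submodule ℝ (Matrix n n 𝕜)

/-- The cone of positive semidefinite matrices in the real vector space of Hermitian matrices. -/
def posSemidefCone (𝕜 n : Type*) [RCLike 𝕜] :
    PointedCone ℝ (HermitianMatrix 𝕜 n) where
  carrier := {X | X.1.PosSemidef}
  add_mem' := PosSemidef.add
  zero_mem' := .zero
  smul_mem' c _ hX := hX.smul c.2

lemma mem_posSemidefCone {X : HermitianMatrix 𝕜 n} :
    X ∈ posSemidefCone 𝕜 n ↔ X.1.PosSemidef := Iff.rfl

lemma posDef_of_mem_interior_posSemidefCone {X : HermitianMatrix 𝕜 n}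
    (hX : X ∈ interior (posSemidefCone 𝕜 n : Set (HermitianMatrix 𝕜 n))) : X.1.PosDef := by
  classical
  let I : HermitianMatrix 𝕜 n := ⟨1, isHermitian_one⟩
  have hcont : Continuous fun t : ℝ ↦ X - t • I := by fun_prop
  have hnear : ∀ᶠ t in 𝓝 (0 : ℝ), X - t • I ∈ posSemidefCone 𝕜 n :=
    hcont.continuousAt.eventually_mem (by simpa using mem_interior_iff_mem_nhds.mp hX)
  have hnear_pos : ∀ᶠ t in 𝓝[>] (0 : ℝ), X - t • I ∈ posSemidefCone 𝕜 n :=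
    hnear.filter_mono nhdsWithin_le_nhds
  obtain ⟨t, hsub, ht⟩ := (hnear_pos.and eventually_mem_nhdsWithin).exists
  have hsum : X.1 - t • 1 + t • 1 = X.1 := sub_add_cancel _ _
  rw [← hsum]
  exact PosDef.posSemidef_add (mem_posSemidefCone.mp hsub) (PosDef.one.smul ht)

open scoped Matrix.Norms.Operator in
lemma eventually_posSemidef_of_isHermitian_nhds_one [Finite n] [DecidableEq n] :
    ∀ᶠ X in 𝓝 (1 : Matrix n n 𝕜), X.IsHermitian → X.PosSemidef := by
  have := Fintype.ofFinite n
  have hcont : Continuous fun X : Matrix n n 𝕜 ↦ ‖X - 1‖ * ‖(1 : Matrix n n 𝕜)‖ := by fun_prop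
  have hnear : ∀ᶠ X in 𝓝 (1 : Matrix n n 𝕜), ‖X - 1‖ * ‖(1 : Matrix n n 𝕜)‖ < 1 :=
    hcont.continuousAt.eventually_lt_const (by simp)
  filter_upwards [hnear] with X hX hherm
  refine hherm.posSemidef_iff_eigenvalues_nonneg.mpr fun i ↦ ?_
  have hmem : hherm.eigenvalues i - 1 ∈ spectrum ℝ (X - 1) := by
    rw [← spectrum.add_mem_add_iff (s := 1)]
    simpa using hherm.eigenvalues_mem_spectrum_real i
  have habs : |hherm.eigenvalues i - 1| < 1 :=
    (spectrum.norm_le_norm_mul_of_mem hmem).trans_lt hX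
  rw [Pi.zero_apply]
  linarith [(abs_lt.mp habs).1]

lemma interior_posSemidefCone_nonempty [Finite n] :
    (interior (posSemidefCone 𝕜 n : Set (HermitianMatrix 𝕜 n))).Nonempty := by
  classical
  refine ⟨⟨1, isHermitian_one⟩, mem_interior_iff_mem_nhds.mpr ?_⟩
  filter_upwards [continuous_subtype_val.continuousAt.eventually
    eventually_posSemidef_of_isHermitian_nhds_one] with X hX
  exact hX X.2

variable [Fintype n]

/-- The Frobenius inner product `A • X = Re tr(Aᴴ X)`, as a real bilinear form. -/
noncomputable def frobeniusForm : Matrix n n 𝕜 →ₗ[ℝ] Matrix n n 𝕜 →ₗ[ℝ] ℝ :=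
  LinearMap.mk₂ ℝ (fun A X ↦ RCLike.re (Aᴴ * X).trace)
    (fun A B X ↦ by simp [Matrix.add_mul])
    (fun c A X ↦ by simp [RCLike.smul_re])
    (fun A X Y ↦ by simp [Matrix.mul_add])
    (fun c A X ↦ by simp [RCLike.smul_re])

lemma frobeniusForm_apply (A X : Matrix n n 𝕜) :
    frobeniusForm A X = RCLike.re (Aᴴ * X).trace := rfl

lemma frobeniusForm_vecMulVec_star {A : Matrix n n 𝕜} (hA : A.IsHermitian) (v : n → 𝕜) :
    frobeniusForm A (vecMulVec v (star v)) = RCLike.re (star v ⬝ᵥ A *ᵥ v) := by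
  rw [frobeniusForm_apply, hA.eq, mul_vecMulVec, trace_vecMulVec, dotProduct_comm]

lemma posSemidef_of_forall_frobeniusForm_nonneg {A : Matrix n n 𝕜} (hA : A.IsHermitian)
    (h : ∀ X : Matrix n n 𝕜, X.PosSemidef → 0 ≤ frobeniusForm A X) : A.PosSemidef := by
  refine .of_dotProduct_mulVec_nonneg hA fun v ↦ RCLike.nonneg_iff.mpr
    ⟨?_, hA.im_star_dotProduct_mulVec_self v⟩
  rw [← frobeniusForm_vecMulVec_star hA]
  exact h _ (posSemidef_vecMulVec_self_star v)

theorem sdp_theorem_of_the_alternative_general {ι : Type*} [Fintype ι]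
    (A : ι → Matrix n n 𝕜) (hA : ∀ i, (A i).IsHermitian) (b : ι → ℝ)
    (hfeas : ∃ X : Matrix n n 𝕜, X.PosSemidef ∧ ∀ i, RCLike.re ((A i)ᴴ * X).trace = b i)
    (halt : ¬ ∃ y : ι → ℝ,
      (∑ i, y i • A i).PosSemidef ∧ ∑ i, y i • A i ≠ 0 ∧ ∑ i, b i * y i = 0) :
    ∃ X : Matrix n n 𝕜, X.PosDef ∧ ∀ i, RCLike.re ((A i)ᴴ * X).trace = b i := by
  obtain ⟨X₀, hX₀, hX₀b⟩ := hfeas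
  let L (i : ι) : HermitianMatrix 𝕜 n →ₗ[ℝ] ℝ :=
    (frobeniusForm (A i)).domRestrict (HermitianMatrix 𝕜 n)
  have hL (y : ι → ℝ) (X : HermitianMatrix 𝕜 n) :
      (∑ i, y i • L i) X = frobeniusForm (∑ i, y i • A i) X.1 := by
    simp [L]
  obtain ⟨X, hX, hXX₀⟩ := conic_theorem_of_the_alternative (posSemidefCone 𝕜 n)
      interior_posSemidefCone_nonempty L (x₀ := ⟨X₀, hX₀.isHermitian⟩) hX₀ <| by
    rintro ⟨y, hnonneg, hne, hzero⟩
    have hherm : (∑ i, y i • A i).IsHermitian :=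
      (HermitianMatrix 𝕜 n).sum_smul_mem y fun i _ ↦ hA i
    refine halt ⟨y, ?_, fun h ↦ hne ?_, ?_⟩
    · refine posSemidef_of_forall_frobeniusForm_nonneg hherm fun X hX ↦ ?_
      exact (hnonneg ⟨X, hX.isHermitian⟩ hX).trans_eq (hL y _)
    · ext X
      simp [hL, h]
    · simpa [L, frobeniusForm_apply, hX₀b, mul_comm] using hzero
  exact ⟨X.1, posDef_of_mem_interior_posSemidefCone hX, fun i ↦ (hXX₀ i).trans (hX₀b i)⟩

end HermitianMatrices

/-- Theorem of the Alternative for SDP feasibility: if the feasible set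
`{X ⪰ 0 : Aᵢ • X = bᵢ}` is nonempty and there is no `y ∈ ℝ^m` with `Σᵢ yᵢ Aᵢ ⪰ 0`,
`Σᵢ yᵢ Aᵢ ≠ 0` and `Σᵢ bᵢ yᵢ = 0`, then Slater's condition holds: there is a feasible
positive definite `X`. -/
theorem sdp_theorem_of_the_alternative (n m : ℕ)
    (A : Fin m → Matrix (Fin n) (Fin n) ℝ) (hA : ∀ i, (A i).IsSymm)
    (b : Fin m → ℝ)
    (hfeas : ∃ X : Matrix (Fin n) (Fin n) ℝ,
      X.PosSemidef ∧ ∀ i, ((A i)ᵀ * X).trace = b i)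
    (halt : ¬ ∃ y : Fin m → ℝ,
      (∑ i, y i • A i).PosSemidef ∧ (∑ i, y i • A i) ≠ 0 ∧ ∑ i, b i * y i = 0) :
    ∃ X : Matrix (Fin n) (Fin n) ℝ,
      X.PosDef ∧ ∀ i, ((A i)ᵀ * X).trace = b i :=
  -- Over `ℝ`, `ᴴ` and `RCLike.re` reduce definitionally to `ᵀ` and the identity.
  sdp_theorem_of_the_alternative_general A hA b hfeas halt
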